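/- arXiv:1402.2724 — 3 statements merged into one kernel-verified Lean document; each statement's English description precedes it below -/
import Mathlib

section
/- Every prime power q ≥ 4 satisfying q > W(q−1)^4 lies in G. -/
/-- `memG q` says that the prime power `q` lies in the set `𝒢`: for every finite field `F`
with `q` elements and all non-zero `a, c ∈ F`, there exists a primitive root `g` of `F`
(i.e. an element of multiplicative order `q - 1`, a generator of `Fˣ`) such that
`a - c * g` is also a primitive root of `F`. -/
def memG (q : ℕ) : Prop :=
  IsPrimePow q ∧ ∀ (F : Type) [Field F] [Fintype F], Fintype.card F = q →
    ∀ a c : F, a ≠ 0 → c ≠ 0 →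
      ∃ g : F, orderOf g = q - 1 ∧ orderOf (a - c * g) = q - 1

open Finset

variable {F : Type*} [Field F] [Fintype F]

theorem MulChar.norm_apply_eq_one_of_ne_zero (χ : MulChar F ℂ) {x : F} (hx : x ≠ 0) :
    ‖χ x‖ = 1 := by
  classical
  exact Complex.norm_eq_one_of_mem_rootsOfUnity (χ.apply_mem_rootsOfUnity (Units.mk0 x hx))

/-- Jacobi sums of two non-trivial characters are bounded by the square root of the field size. -/
theorem norm_jacobiSum_le_sqrt {χ φ : MulChar F ℂ} (hχ : χ ≠ 1) (hφ : φ ≠ 1) :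
    ‖jacobiSum χ φ‖ ≤ √(Fintype.card F : ℝ) := by
  have hcard : (1 : ℝ) ≤ Fintype.card F := by exact_mod_cast Fintype.card_pos (α := F)
  by_cases h : χ * φ = 1
  · obtain rfl : φ = χ⁻¹ := eq_inv_of_mul_eq_one_right h
    rw [jacobiSum_nontrivial_inv hχ, norm_neg,
      χ.norm_apply_eq_one_of_ne_zero (neg_ne_zero.mpr one_ne_zero)]
    exact Real.one_le_sqrt.mpr hcard
  · have hchar : ringChar ℂ ≠ ringChar F := by
      rw [ringChar.eq_zero]
      exact (CharP.ringChar_ne_zero_of_finite F).symm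
    have hmul := jacobiSum_mul_jacobiSum_inv hchar hχ hφ h
    have hconj : jacobiSum χ⁻¹ φ⁻¹ = starRingEnd ℂ (jacobiSum χ φ) := by
      simp only [jacobiSum, map_sum, map_mul, ← MulChar.star_eq_inv, MulChar.star_apply,
        starRingEnd_apply]
    rw [hconj, Complex.mul_conj'] at hmul
    refine Real.le_sqrt_of_sq_le (le_of_eq ?_)
    exact_mod_cast hmul

/-- There are characters of each prime order `p ∣ #F - 1` such that a non-zero element of `F`
on which none of them takes the value `1` is a primitive root. -/
theorem exists_mulChar_family_detecting_primitive_roots :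
    ∃ X : ℕ → MulChar F ℂ, (∀ p ∈ (Fintype.card F - 1).primeFactors, orderOf (X p) = p) ∧
      ∀ x : F, x ≠ 0 → (∀ p ∈ (Fintype.card F - 1).primeFactors, X p x ≠ 1) →
        orderOf x = Fintype.card F - 1 := by
  have hex : ∀ p : ℕ, ∃ χ : MulChar F ℂ,
      p ∈ (Fintype.card F - 1).primeFactors → orderOf χ = p := fun p ↦ by
    by_cases hp : p ∈ (Fintype.card F - 1).primeFactors
    · have hpp := Nat.prime_of_mem_primeFactors hp
      obtain ⟨χ, hχ⟩ := MulChar.exists_mulChar_orderOf F (Nat.dvd_of_mem_primeFactors hp)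
        (Complex.isPrimitiveRoot_exp p hpp.ne_zero)
      exact ⟨χ, fun _ ↦ hχ⟩
    · exact ⟨1, fun h ↦ absurd h hp⟩
  choose X hX using hex
  refine ⟨X, hX, fun x hx hne ↦ ?_⟩
  have hcard : 0 < Fintype.card F - 1 := Nat.sub_pos_of_lt Fintype.one_lt_card
  refine orderOf_eq_of_pow_and_pow_div_prime hcard (FiniteField.pow_card_sub_one_eq_one x hx) ?_
  intro p hp hpd hpow
  have hmem : p ∈ (Fintype.card F - 1).primeFactors :=
    Nat.mem_primeFactors.mpr ⟨hp, hpd, hcard.ne'⟩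
  obtain ⟨g, hg⟩ := IsCyclic.exists_generator (α := Fˣ)
  obtain ⟨k, hk⟩ := (mem_powers_iff_mem_zpowers.mpr (hg (Units.mk0 x hx)))
  have hxk : x = (g : F) ^ k := by
    have := congrArg Units.val hk
    simpa using this.symm
  have hgo : orderOf g = Fintype.card F - 1 := by
    rw [orderOf_eq_card_of_forall_mem_zpowers hg, Nat.card_units, Nat.card_eq_fintype_card]
  have hgk : g ^ (k * ((Fintype.card F - 1) / p)) = 1 := by
    ext
    rw [Units.val_pow_eq_pow_val, pow_mul, ← hxk, hpow, Units.val_one]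
  have hdvd := orderOf_dvd_of_pow_eq_one hgk
  rw [hgo] at hdvd
  obtain ⟨m, hm⟩ := hpd
  rw [hm, Nat.mul_div_cancel_left m hp.pos] at hdvd
  have hm0 : 0 < m := Nat.pos_of_ne_zero (by rintro rfl; omega)
  obtain ⟨j, rfl⟩ := Nat.dvd_of_mul_dvd_mul_right hm0 hdvd
  apply hne p hmem
  have hXp : X p ^ p = 1 := by simpa [hX p hmem] using pow_orderOf_eq_one (X p)
  rw [hxk, map_pow, pow_mul, ← MulChar.pow_apply_coe, hXp, MulChar.one_apply_coe, one_pow]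

/-- Expanding `∏ p ∈ S, (1 - p⁻¹ * ∑ i < p, X p ^ i)` into characters gives a function vanishing
wherever some `X p` equals `1`, whose coefficients have total mass at most `2 ^ #S` times the
coefficient of the trivial character. -/
theorem exists_sieve_coefficients [Fintype (MulChar F ℂ)] (X : ℕ → MulChar F ℂ) (S : Finset ℕ)
    (hS : ∀ p ∈ S, p.Prime) (hX : ∀ p ∈ S, orderOf (X p) = p) :
    ∃ (c : MulChar F ℂ → ℂ) (θ : ℝ), 0 < θ ∧ c 1 = θ ∧ ∑ χ, ‖c χ‖ ≤ 2 ^ S.card * θ ∧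
      (∀ χ, c χ ≠ 0 → χ ^ (∏ p ∈ S, p) = 1) ∧
      ∀ x : F, (∃ p ∈ S, X p x = 1) → ∑ χ, c χ * χ x = 0 := by
  classical
  induction S using Finset.induction_on with
  | empty =>
    refine ⟨Pi.single 1 1, 1, one_pos, by simp, ?_, ?_, by simp⟩
    · simp [Pi.single_apply, apply_ite norm]
    · intro χ hχ
      by_contra h
      exact hχ (Pi.single_eq_of_ne (by simpa using h) _)
  | insert p S hpS ih =>
    obtain ⟨c, θ, hθ, hc1, hsum, hsupp, hvan⟩ := ih (fun r hr ↦ hS r (mem_insert_of_mem hr))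
      (fun r hr ↦ hX r (mem_insert_of_mem hr))
    have hp : p.Prime := hS p (mem_insert_self p S)
    have hXp : orderOf (X p) = p := hX p (mem_insert_self p S)
    have hp1 : (1 : ℝ) < p := by exact_mod_cast hp.one_lt
    have hpos : 0 < 1 - 1 / (p : ℝ) := by
      rw [sub_pos, div_lt_one (by linarith)]
      exact hp1
    have hp0 : (p : ℂ) ≠ 0 := by exact_mod_cast hp.ne_zero
    have hshift (i : ℕ) (f : MulChar F ℂ → ℂ) :
        ∑ χ, f (χ * (X p ^ i)⁻¹) = ∑ χ, f χ :=
      Equiv.sum_comp (Equiv.mulRight (X p ^ i)⁻¹) f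
    have hshift' (i : ℕ) (f : MulChar F ℂ → ℝ) :
        ∑ χ, f (χ * (X p ^ i)⁻¹) = ∑ χ, f χ :=
      Equiv.sum_comp (Equiv.mulRight (X p ^ i)⁻¹) f
    refine ⟨fun χ ↦ (1 - 1 / p) * c χ - 1 / p * ∑ i ∈ Ico 1 p, c (χ * (X p ^ i)⁻¹),
      (1 - 1 / p) * θ, ?_, ?_, ?_, ?_, ?_⟩
    · exact mul_pos hpos hθ
    · have hzero : ∑ i ∈ Ico 1 p, c (1 * (X p ^ i)⁻¹) = 0 := by
        refine sum_eq_zero fun i hi ↦ ?_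
        rw [mem_Ico] at hi
        by_contra hne
        have h1 := hsupp _ hne
        rw [one_mul, inv_pow, inv_eq_one, ← pow_mul] at h1
        have h2 := orderOf_dvd_of_pow_eq_one h1
        rw [hXp, hp.dvd_mul] at h2
        rcases h2 with h2 | h2
        · exact absurd (Nat.le_of_dvd (by omega) h2) (by omega)
        · obtain ⟨r, hr, hpr⟩ := (Prime.dvd_finsetProd_iff hp.prime _).mp h2
          rw [Nat.prime_dvd_prime_iff_eq hp (hS r (mem_insert_of_mem hr))] at hpr
          exact hpS (hpr ▸ hr)
      simp only [hzero, hc1]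
      push_cast
      ring
    · calc ∑ χ, ‖(1 - 1 / (p : ℂ)) * c χ - 1 / p * ∑ i ∈ Ico 1 p, c (χ * (X p ^ i)⁻¹)‖
          ≤ ∑ χ, ((1 - 1 / (p : ℝ)) * ‖c χ‖ +
              1 / p * ∑ i ∈ Ico 1 p, ‖c (χ * (X p ^ i)⁻¹)‖) := by
            refine sum_le_sum fun χ _ ↦ (norm_sub_le _ _).trans (add_le_add ?_ ?_)
            · rw [norm_mul]
              refine le_of_eq ?_
              congr 1
              rw [show (1 - 1 / (p : ℂ)) = ((1 - 1 / (p : ℝ) : ℝ) : ℂ) by push_cast; rfl,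
                Complex.norm_real, Real.norm_of_nonneg hpos.le]
            · rw [norm_mul, norm_div, norm_one, Complex.norm_natCast]
              gcongr
              exact norm_sum_le _ _
        _ = 2 * (1 - 1 / (p : ℝ)) * ∑ χ, ‖c χ‖ := by
            rw [sum_add_distrib, ← mul_sum, ← mul_sum, sum_comm]
            simp only [hshift' _ (fun χ ↦ ‖c χ‖), sum_const, Nat.card_Ico, nsmul_eq_mul]
            rw [Nat.cast_sub hp.one_lt.le]
            field_simp
            push_cast
            ring
        _ ≤ 2 * (1 - 1 / (p : ℝ)) * (2 ^ S.card * θ) := by gcongr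
        _ = 2 ^ (insert p S).card * ((1 - 1 / (p : ℝ)) * θ) := by
            rw [card_insert_of_notMem hpS]
            ring
    · intro χ hχ
      rw [prod_insert hpS]
      by_cases h0 : c χ = 0
      · have hs : ∑ i ∈ Ico 1 p, c (χ * (X p ^ i)⁻¹) ≠ 0 := fun hs ↦ hχ (by simp [h0, hs])
        obtain ⟨i, -, hi⟩ := exists_ne_zero_of_sum_ne_zero hs
        have h1 := hsupp _ hi
        have hXpp : X p ^ p = 1 := by simpa [hXp] using pow_orderOf_eq_one (X p)
        have h2 : (χ * (X p ^ i)⁻¹) ^ p = χ ^ p := by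
          rw [mul_pow, inv_pow, ← pow_mul, mul_comm i, pow_mul, hXpp, one_pow, inv_one, mul_one]
        rw [pow_mul, ← h2, pow_right_comm, h1, one_pow]
      · rw [mul_comm, pow_mul, hsupp _ h0, one_pow]
    · intro x hx
      have hfac : ∑ χ, ((1 - 1 / (p : ℂ)) * c χ - 1 / p * ∑ i ∈ Ico 1 p, c (χ * (X p ^ i)⁻¹)) * χ x
          = (1 - 1 / (p : ℂ) - 1 / p * ∑ i ∈ Ico 1 p, (X p x) ^ i) * ∑ χ, c χ * χ x := by
        have hi (i : ℕ) (hi : i ∈ Ico 1 p) : ∑ χ, c (χ * (X p ^ i)⁻¹) * χ x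
            = X p x ^ i * ∑ χ, c χ * χ x := by
          rw [mul_sum, ← hshift i fun χ ↦ X p x ^ i * (c χ * χ x)]
          refine sum_congr rfl fun χ _ ↦ ?_
          rw [mem_Ico] at hi
          have : χ x = (χ * (X p ^ i)⁻¹) x * X p x ^ i := by
            rw [← MulChar.pow_apply' _ (by omega), ← MulChar.mul_apply, inv_mul_cancel_right]
          linear_combination c (χ * (X p ^ i)⁻¹) * this
        simp only [sub_mul, sum_sub_distrib, mul_assoc, ← mul_sum, sum_mul]
        rw [sum_comm, sum_congr rfl hi]
      rw [hfac]
      obtain ⟨r, hr, hrx⟩ := hx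
      rcases mem_insert.mp hr with rfl | hr
      · have hone : 1 - 1 / (r : ℂ) - 1 / r * ∑ i ∈ Ico 1 r, (X r x) ^ i = 0 := by
          simp only [hrx, one_pow, sum_const, Nat.card_Ico, nsmul_eq_mul, mul_one]
          rw [Nat.cast_sub hp.one_lt.le]
          field_simp
          push_cast
          ring
        rw [hone, zero_mul]
      · rw [hvan x ⟨r, hr, hrx⟩, mul_zero]

/-- If the total mass of the coefficients `c` is at most `W * c 1` and `W ^ 4 < #F`, then the
function `∑ χ, c χ * χ` is non-zero simultaneously at `u * x` and `v * (1 - x)` for some `x`. -/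
theorem exists_sieve_weights_ne_zero [Fintype (MulChar F ℂ)] {c : MulChar F ℂ → ℂ} {θ W : ℝ}
    (hθ : 0 < θ) (hc1 : c 1 = θ) (hsum : ∑ χ, ‖c χ‖ ≤ W * θ) (hq : 4 ≤ Fintype.card F)
    (hW : W ^ 4 < Fintype.card F) {u v : F} (hu : u ≠ 0) (hv : v ≠ 0) :
    ∃ x : F, ∑ χ, c χ * χ (u * x) ≠ 0 ∧ ∑ χ, c χ * χ (v * (1 - x)) ≠ 0 := by
  classical
  by_contra! hcon
  set T : MulChar F ℂ → MulChar F ℂ → ℂ :=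
    fun χ ψ ↦ c χ * c ψ * (χ u * ψ v) * jacobiSum χ ψ with hT
  have htotal : ∑ χ, ∑ ψ, T χ ψ = 0 := by
    have : ∑ x : F, (∑ χ, c χ * χ (u * x)) * ∑ χ, c χ * χ (v * (1 - x)) = 0 := by
      refine sum_eq_zero fun x _ ↦ ?_
      by_cases hx : ∑ χ, c χ * χ (u * x) = 0
      · rw [hx, zero_mul]
      · rw [hcon x hx, mul_zero]
    rw [← this]
    simp only [sum_mul_sum, hT, jacobiSum]
    rw [sum_comm (s := (univ : Finset F))]
    refine sum_congr rfl fun χ _ ↦ ?_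
    rw [sum_comm (s := (univ : Finset F))]
    refine sum_congr rfl fun ψ _ ↦ ?_
    rw [mul_sum]
    refine sum_congr rfl fun x _ ↦ ?_
    rw [map_mul, map_mul]
    ring
  have hTnorm (χ ψ) : ‖T χ ψ‖ = ‖c χ‖ * ‖c ψ‖ * ‖jacobiSum χ ψ‖ := by
    simp only [hT, norm_mul, MulChar.norm_apply_eq_one_of_ne_zero _ hu,
      MulChar.norm_apply_eq_one_of_ne_zero _ hv, mul_one]
  set q : ℝ := (Fintype.card F : ℝ) with hqdef
  have hq4 : (4 : ℝ) ≤ q := by rw [hqdef]; exact_mod_cast hq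
  set M : ℝ := ∑ χ ∈ univ.erase 1, ‖c χ‖ with hM
  have hnc1 : ‖c 1‖ = θ := by rw [hc1, Complex.norm_real, Real.norm_of_nonneg hθ.le]
  have hMW : M ≤ (W - 1) * θ := by
    have := add_sum_erase univ (fun χ ↦ ‖c χ‖) (mem_univ (1 : MulChar F ℂ))
    simp only [hnc1] at this
    linarith
  have hM0 : 0 ≤ M := sum_nonneg fun _ _ ↦ norm_nonneg _
  have hmain : θ ^ 2 * (q - 2) ≤ 2 * θ * M + M ^ 2 * √q := by
    have hsplit : T 1 1 = -(∑ ψ ∈ univ.erase 1, T 1 ψ + ∑ χ ∈ univ.erase 1, T χ 1 +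
        ∑ χ ∈ univ.erase 1, ∑ ψ ∈ univ.erase 1, T χ ψ) := by
      rw [← add_sum_erase univ _ (mem_univ (1 : MulChar F ℂ))] at htotal
      simp only [← add_sum_erase univ (T _) (mem_univ (1 : MulChar F ℂ)),
        sum_add_distrib] at htotal
      linear_combination htotal
    have h11 : ‖T 1 1‖ = θ ^ 2 * (q - 2) := by
      rw [hTnorm, jacobiSum_one_one, hnc1]
      have : ((Fintype.card F : ℂ) - 2) = ((q - 2 : ℝ) : ℂ) := by rw [hqdef]; push_cast; rfl
      rw [this, Complex.norm_real, Real.norm_of_nonneg (by linarith)]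
      ring
    rw [← h11, hsplit, norm_neg]
    have b1 : ‖∑ ψ ∈ univ.erase 1, T 1 ψ‖ ≤ θ * M := by
      refine (norm_sum_le _ _).trans (le_of_eq ?_)
      rw [hM, mul_sum]
      refine sum_congr rfl fun ψ hψ ↦ ?_
      rw [hTnorm, jacobiSum_one_nontrivial (ne_of_mem_erase hψ), hnc1, norm_neg, norm_one, mul_one]
    have b2 : ‖∑ χ ∈ univ.erase 1, T χ 1‖ ≤ θ * M := by
      refine (norm_sum_le _ _).trans (le_of_eq ?_)
      rw [hM, mul_sum]
      refine sum_congr rfl fun χ hχ ↦ ?_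
      rw [hTnorm, jacobiSum_comm, jacobiSum_one_nontrivial (ne_of_mem_erase hχ), hnc1, norm_neg,
        norm_one, mul_one, mul_comm]
    have b3 : ‖∑ χ ∈ univ.erase 1, ∑ ψ ∈ univ.erase 1, T χ ψ‖ ≤ M ^ 2 * √q := by
      rw [hM, sq, sum_mul_sum, sum_mul]
      refine (norm_sum_le _ _).trans (sum_le_sum fun χ hχ ↦ ?_)
      rw [sum_mul]
      refine (norm_sum_le _ _).trans (sum_le_sum fun ψ hψ ↦ ?_)
      rw [hTnorm]
      gcongr
      exact norm_jacobiSum_le_sqrt (ne_of_mem_erase hχ) (ne_of_mem_erase hψ)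
    refine (norm_add₃_le).trans ?_
    linarith
  have hW1 : 1 ≤ W := by
    by_contra! hlt
    nlinarith
  have hs2 : 2 ≤ √q := Real.le_sqrt_of_sq_le (by linarith)
  have hsq : √q * √q = q := Real.mul_self_sqrt (by linarith)
  have hsW : W ^ 2 < √q := Real.lt_sqrt_of_sq_lt (by rw [← pow_mul]; exact hW)
  have hle : θ ^ 2 * (q - 2) ≤ θ ^ 2 * (2 * (W - 1) + (W - 1) ^ 2 * √q) := by
    calc θ ^ 2 * (q - 2) ≤ 2 * θ * M + M ^ 2 * √q := hmain
      _ ≤ 2 * θ * ((W - 1) * θ) + ((W - 1) * θ) ^ 2 * √q := by gcongr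
      _ = _ := by ring
  have hle' := le_of_mul_le_mul_left hle (by positivity)
  nlinarith [mul_lt_mul_of_pos_right hsW (by linarith : 0 < √q),
    mul_nonneg (by linarith : 0 ≤ 2 * W - 1) (by linarith : 0 ≤ √q - 2)]

/-- Every prime power `q ≥ 4` with `q > W(q-1)⁴` lies in `𝒢`, where
`W(n) = 2^(number of distinct prime factors of n)`. -/
theorem memG_of_gt_W_pow_four (q : ℕ) (hq : IsPrimePow q) (hq4 : 4 ≤ q)
    (h : (2 ^ (q - 1).primeFactors.card) ^ 4 < q) : memG q := by
  refine ⟨hq, fun F _ _ hF a c ha hc ↦ ?_⟩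
  subst hF
  have : Fintype (MulChar F ℂ) := Fintype.ofFinite _
  obtain ⟨X, hX, hprim⟩ := exists_mulChar_family_detecting_primitive_roots (F := F)
  obtain ⟨w, θ, hθ, hw1, hsum, -, hvan⟩ := exists_sieve_coefficients X
    (Fintype.card F - 1).primeFactors (fun p ↦ Nat.prime_of_mem_primeFactors) hX
  have horder (x : F) (hx : ∑ χ, w χ * χ x ≠ 0) : orderOf x = Fintype.card F - 1 := by
    refine hprim x ?_ fun p hp hpx ↦ hx (hvan x ⟨p, hp, hpx⟩)
    rintro rfl
    exact hx (sum_eq_zero fun χ _ ↦ by rw [MulChar.map_zero, mul_zero])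
  obtain ⟨x, hx, hx'⟩ := exists_sieve_weights_ne_zero hθ hw1 hsum hq4 (by exact_mod_cast h)
    (div_ne_zero ha hc) ha
  refine ⟨a / c * x, horder _ hx, ?_⟩
  rw [show a - c * (a / c * x) = a * (1 - x) by field_simp]
  exact horder _ hx'
end

section
/- Every prime power q with ω(q−1) = 8 and q > 14647129 lies in G. -/
open Finset

namespace PrimitiveRootSum

variable {F : Type} [Field F] {X : ℕ → MulChar F ℂ} {P Q : Finset ℕ} {p : ℕ} {h : F → ℂ}

/-- `X p` has order `p` for each `p ∈ P`, and these `p` are primes. -/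
def IsPrimeOrderFamily (X : ℕ → MulChar F ℂ) (P : Finset ℕ) : Prop :=
  ∀ p ∈ P, p.Prime ∧ orderOf (X p) = p

lemma IsPrimeOrderFamily.mono (hX : IsPrimeOrderFamily X Q) (hPQ : P ⊆ Q) :
    IsPrimeOrderFamily X P := fun r hr => hX r (hPQ hr)

lemma sum_pow_Ico_of_pow_eq_one {p : ℕ} (hp : 0 < p) {z : ℂ} (hz : z ^ p = 1) :
    ∑ k ∈ Ico 1 p, z ^ k = if z = 1 then (p : ℂ) - 1 else -1 := by
  have hsplit : ∑ k ∈ range p, z ^ k = 1 + ∑ k ∈ Ico 1 p, z ^ k := by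
    rw [range_eq_Ico, sum_eq_sum_Ico_succ_bot hp, pow_zero]
  split_ifs with h
  · simp [h, Nat.cast_sub (Nat.one_le_of_lt hp)]
  · have hgeom := geom_sum_mul z p
    rw [hz, sub_self] at hgeom
    rcases mul_eq_zero.1 hgeom with h0 | h0
    · rw [h0] at hsplit
      linear_combination -hsplit
    · exact absurd (sub_eq_zero.1 h0) h

lemma mulChar_mul_indicator {Y : MulChar F ℂ} {p : ℕ} (hp : p.Prime) (hY : orderOf Y = p)
    (χ : MulChar F ℂ) (x : F) :
    χ x * (if Y x = 1 then 0 else 1) =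
      (1 - 1 / (p : ℂ)) * χ x - 1 / (p : ℂ) * ∑ k ∈ Ico 1 p, (χ * Y ^ k) x := by
  have hp0 : (p : ℂ) ≠ 0 := by exact_mod_cast hp.ne_zero
  by_cases hx : x = 0
  · simp [hx, MulChar.map_zero]
  · have hz : Y x ^ p = 1 := by
      rw [← MulChar.pow_apply' _ hp.ne_zero, ← hY, pow_orderOf_eq_one,
        MulChar.one_apply (Ne.isUnit hx)]
    have hsum : ∑ k ∈ Ico 1 p, (χ * Y ^ k) x = χ x * ∑ k ∈ Ico 1 p, Y x ^ k := by
      rw [mul_sum]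
      refine sum_congr rfl fun k hk => ?_
      rw [MulChar.mul_apply, MulChar.pow_apply' _ (by simp at hk; omega)]
    rw [hsum, sum_pow_Ico_of_pow_eq_one hp.pos hz]
    split_ifs <;> field_simp <;> ring

lemma one_sub_inv_nonneg (hp : p.Prime) : 0 ≤ 1 - 1 / (p : ℝ) := by
  have : (1 : ℝ) ≤ p := by exact_mod_cast hp.one_le
  rw [sub_nonneg, div_le_one (by linarith)]
  exact this

lemma mul_pow_ne_one {Y χ : MulChar F ℂ} {k : ℕ} (hY : orderOf Y = p)
    (hχ : (orderOf χ).Coprime p) (hk : k ∈ Ico 1 p) : χ * Y ^ k ≠ 1 := by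
  intro hone
  rw [mem_Ico] at hk
  have hdvd : orderOf χ ∣ p := by
    rw [eq_inv_of_mul_eq_one_left hone, orderOf_inv, ← hY]
    exact orderOf_pow_dvd k
  have h1 : χ = 1 := orderOf_eq_one_iff.1 (Nat.Coprime.eq_one_of_dvd hχ hdvd)
  rw [h1, one_mul] at hone
  have := Nat.le_of_dvd (by omega) (orderOf_dvd_of_pow_eq_one hone)
  omega

lemma coprime_orderOf_mul_pow {χ : MulChar F ℂ} (hX : IsPrimeOrderFamily X (insert p P))
    (hpP : p ∉ P) (hχ : ∀ r ∈ P, (orderOf χ).Coprime r) (k : ℕ) :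
    ∀ r ∈ P, (orderOf (χ * X p ^ k)).Coprime r := by
  intro r hr
  obtain ⟨hp, hord⟩ := hX p (mem_insert_self _ _)
  have hr' := (hX r (mem_insert_of_mem hr)).1
  have hpr : p.Coprime r := (Nat.coprime_primes hp hr').2 (by rintro rfl; exact hpP hr)
  refine Nat.Coprime.coprime_dvd_left (Commute.orderOf_mul_dvd_mul_orderOf (Commute.all _ _)) ?_
  refine Nat.Coprime.mul_left (hχ r hr) (hpr.coprime_dvd_left ?_)
  conv_rhs => rw [← hord]
  exact orderOf_pow_dvd k

/-- The indicator function of the non-zero elements at which no `X p`, for `p ∈ P`, is `1`. -/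
noncomputable def mask (X : ℕ → MulChar F ℂ) (P : Finset ℕ) (x : F) : ℂ :=
  (1 : MulChar F ℂ) x * ∏ p ∈ P, if X p x = 1 then 0 else 1

open Classical in
lemma mask_eq_ite (x : F) :
    mask X P x = if x ≠ 0 ∧ ∀ p ∈ P, X p x ≠ 1 then 1 else 0 := by
  by_cases hx : x = 0
  · simp [mask, hx, MulChar.map_zero]
  · rw [mask, MulChar.one_apply (Ne.isUnit hx), one_mul]
    split_ifs with hP
    · exact prod_eq_one fun p hp => if_neg (hP.2 p hp)
    · push Not at hP
      obtain ⟨p, hp, hpx⟩ := hP hx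
      exact prod_eq_zero hp (if_pos hpx)

variable [Fintype F]

/-- Jacobi sums of two complex characters that are not both trivial are at most `√q`. -/
lemma norm_jacobiSum_le {χ ψ : MulChar F ℂ} (h : χ = 1 → ψ ≠ 1) :
    ‖jacobiSum χ ψ‖ ≤ √(Fintype.card F) := by
  have hone : (1 : ℝ) ≤ √(Fintype.card F) :=
    Real.one_le_sqrt.2 (by exact_mod_cast Fintype.card_pos)
  by_cases hχ : χ = 1
  · rw [hχ, jacobiSum_one_nontrivial (h hχ)]
    simpa using hone
  by_cases hψ : ψ = 1
  · rw [hψ, jacobiSum_comm, jacobiSum_one_nontrivial hχ]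
    simpa using hone
  by_cases hχψ : χ * ψ = 1
  · rw [eq_inv_of_mul_eq_one_right hχψ, jacobiSum_nontrivial_inv hχ, norm_neg]
    refine le_trans (le_of_eq ?_) hone
    have hsq : χ (-1) * χ (-1) = 1 := by rw [← map_mul]; simp
    have hnorm := congrArg norm hsq
    rw [norm_mul, norm_one] at hnorm
    nlinarith [norm_nonneg (χ (-1))]
  · have hchar : ringChar ℂ ≠ ringChar F := by
      rw [ringChar.eq_zero]
      exact (CharP.ringChar_ne_zero_of_finite F).symm
    have hmul := jacobiSum_mul_jacobiSum_inv hchar hχ hψ hχψ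
    have hstar : jacobiSum χ⁻¹ ψ⁻¹ = starRingEnd ℂ (jacobiSum χ ψ) := by
      rw [← MulChar.star_eq_inv, ← MulChar.star_eq_inv]
      exact jacobiSum_ringHomComp χ ψ _
    rw [hstar, Complex.mul_conj, Complex.normSq_eq_norm_sq] at hmul
    refine Real.le_sqrt_of_sq_le (le_of_eq ?_)
    exact_mod_cast hmul

lemma sum_mulChar_mul_affine (χ ψ : MulChar F ℂ) {a c : F} (ha : a ≠ 0) (hc : c ≠ 0) :
    ∑ x, χ x * ψ (a - c * x) = χ (a / c) * ψ a * jacobiSum χ ψ := by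
  rw [jacobiSum, mul_sum, ← Equiv.sum_comp (Equiv.mulLeft₀ (a / c) (div_ne_zero ha hc))]
  refine sum_congr rfl fun x _ => ?_
  have hx : a - c * (a / c * x) = a * (1 - x) := by field_simp
  rw [Equiv.mulLeft₀_apply, hx, map_mul, map_mul]
  ring

lemma norm_mulChar_le_one (χ : MulChar F ℂ) (x : F) : ‖χ x‖ ≤ 1 := by
  by_cases hx : x = 0
  · simp [hx, χ.map_zero]
  · have hpow : χ x ^ (Fintype.card F - 1) = 1 := by
      rw [← map_pow, FiniteField.pow_card_sub_one_eq_one x hx, map_one]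
    exact (Complex.norm_eq_one_of_pow_eq_one hpow
      (Nat.sub_ne_zero_of_lt Fintype.one_lt_card)).le

lemma norm_sum_mulChar_mul_affine_le {χ ψ : MulChar F ℂ} {a c : F} (ha : a ≠ 0) (hc : c ≠ 0)
    (h : χ = 1 → ψ ≠ 1) : ‖∑ x, χ x * ψ (a - c * x)‖ ≤ √(Fintype.card F) := by
  rw [sum_mulChar_mul_affine χ ψ ha hc, norm_mul, norm_mul]
  have := mul_le_one₀ (norm_mulChar_le_one χ (a / c)) (norm_nonneg _) (norm_mulChar_le_one ψ a)
  exact (mul_le_of_le_one_left (norm_nonneg _) this).trans (norm_jacobiSum_le h)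

lemma sum_one_mul_affine {a c : F} (ha : a ≠ 0) (hc : c ≠ 0) :
    ∑ x, (1 : MulChar F ℂ) x * (1 : MulChar F ℂ) (a - c * x) = Fintype.card F - 2 := by
  rw [sum_mulChar_mul_affine 1 1 ha hc, jacobiSum_one_one,
    MulChar.one_apply (div_ne_zero ha hc).isUnit, MulChar.one_apply ha.isUnit]
  ring

/-- The sum of the values of `h` twisted by `χ` over those `x` at which none of the characters
`X p`, for `p ∈ P`, takes the value `1`. -/
noncomputable def sievedSum (X : ℕ → MulChar F ℂ) (χ : MulChar F ℂ) (P : Finset ℕ) (h : F → ℂ) :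
    ℂ :=
  ∑ x, χ x * (∏ p ∈ P, if X p x = 1 then 0 else 1) * h x

/-- The proportion `∏ (1 - 1/p)` of elements that survive a sieve by the primes in `P`. -/
noncomputable def density (P : Finset ℕ) : ℝ := ∏ p ∈ P, (1 - 1 / (p : ℝ))

lemma sievedSum_insert (hX : IsPrimeOrderFamily X (insert p P)) (hpP : p ∉ P)
    (χ : MulChar F ℂ) :
    sievedSum X χ (insert p P) h = (1 - 1 / (p : ℂ)) * sievedSum X χ P h -
      1 / (p : ℂ) * ∑ k ∈ Ico 1 p, sievedSum X (χ * X p ^ k) P h := by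
  obtain ⟨hp, hord⟩ := hX p (mem_insert_self _ _)
  simp only [sievedSum]
  rw [sum_comm, mul_sum, mul_sum, ← sum_sub_distrib]
  refine sum_congr rfl fun x _ => ?_
  rw [prod_insert hpP, ← mul_assoc, mulChar_mul_indicator hp hord, ← sum_mul, ← sum_mul]
  ring

lemma norm_sievedSum_insert_sub_le (hX : IsPrimeOrderFamily X (insert p P)) (hpP : p ∉ P)
    {χ : MulChar F ℂ} {B : ℝ} (hB : ∀ k ∈ Ico 1 p, ‖sievedSum X (χ * X p ^ k) P h‖ ≤ B) :
    ‖sievedSum X χ (insert p P) h - ((1 - 1 / (p : ℝ) : ℝ) : ℂ) * sievedSum X χ P h‖ ≤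
      (1 - 1 / (p : ℝ)) * B := by
  have hp := (hX p (mem_insert_self _ _)).1
  have hp0 : (p : ℝ) ≠ 0 := by exact_mod_cast hp.ne_zero
  have hrw : sievedSum X χ (insert p P) h - ((1 - 1 / (p : ℝ) : ℝ) : ℂ) * sievedSum X χ P h =
      -(1 / (p : ℂ) * ∑ k ∈ Ico 1 p, sievedSum X (χ * X p ^ k) P h) := by
    rw [sievedSum_insert hX hpP]
    push_cast
    ring
  rw [hrw, norm_neg, norm_mul, norm_div, norm_one, Complex.norm_natCast]
  calc 1 / (p : ℝ) * ‖∑ k ∈ Ico 1 p, sievedSum X (χ * X p ^ k) P h‖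
      ≤ 1 / (p : ℝ) * ((Ico 1 p).card • B) := by
        gcongr
        exact (norm_sum_le _ _).trans (sum_le_card_nsmul _ _ _ hB)
    _ = (1 - 1 / (p : ℝ)) * B := by
        rw [Nat.card_Ico, nsmul_eq_mul, Nat.cast_sub hp.one_le, Nat.cast_one]
        field_simp

/-- The bound `B` for sums twisted by characters propagates to sieved sums; `C` records whether
the trivial character is also allowed. -/
lemma norm_sievedSum_le {C : Prop} {B : ℝ}
    (hB : ∀ χ : MulChar F ℂ, (χ = 1 → C) → ‖∑ x, χ x * h x‖ ≤ B)
    (hX : IsPrimeOrderFamily X P) :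
    ∀ χ : MulChar F ℂ, (χ = 1 → C) → (∀ r ∈ P, (orderOf χ).Coprime r) →
      ‖sievedSum X χ P h‖ ≤ 2 ^ P.card * density P * B := by
  induction P using Finset.induction_on with
  | empty =>
    intro χ hχ _
    simpa [sievedSum, density] using hB χ hχ
  | insert p P hpP ih =>
    intro χ hC hχ
    have hp := (hX p (mem_insert_self _ _)).1
    have hχP : ∀ r ∈ P, (orderOf χ).Coprime r := fun r hr => hχ r (mem_insert_of_mem hr)
    have ih := ih (hX.mono (subset_insert _ _))
    have hsub := norm_sievedSum_insert_sub_le (h := h) hX hpP (χ := χ) fun k hk =>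
      ih (χ * X p ^ k) (fun h1 => absurd h1 (mul_pow_ne_one (hX p (mem_insert_self _ _)).2
        (hχ p (mem_insert_self _ _)) hk)) (coprime_orderOf_mul_pow hX hpP hχP k)
    have hmain : ‖((1 - 1 / (p : ℝ) : ℝ) : ℂ) * sievedSum X χ P h‖ ≤
        (1 - 1 / (p : ℝ)) * (2 ^ P.card * density P * B) := by
      rw [norm_mul, Complex.norm_real, Real.norm_of_nonneg (one_sub_inv_nonneg hp)]
      exact mul_le_mul_of_nonneg_left (ih χ hC hχP) (one_sub_inv_nonneg hp)
    have htri := norm_add_le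
      (sievedSum X χ (insert p P) h - ((1 - 1 / (p : ℝ) : ℝ) : ℂ) * sievedSum X χ P h)
      (((1 - 1 / (p : ℝ) : ℝ) : ℂ) * sievedSum X χ P h)
    rw [sub_add_cancel] at htri
    rw [density, prod_insert hpP, card_insert_of_notMem hpP, ← density, pow_succ]
    linarith

lemma norm_sievedSum_one_insert_sub_le {B : ℝ}
    (hB : ∀ χ : MulChar F ℂ, χ ≠ 1 → ‖∑ x, χ x * h x‖ ≤ B)
    (hX : IsPrimeOrderFamily X (insert p P)) (hpP : p ∉ P) :
    ‖sievedSum X 1 (insert p P) h - ((1 - 1 / (p : ℝ) : ℝ) : ℂ) * sievedSum X 1 P h‖ ≤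
      (1 - 1 / (p : ℝ)) * (2 ^ P.card * density P * B) := by
  refine norm_sievedSum_insert_sub_le hX hpP fun k hk =>
    norm_sievedSum_le (C := False) hB (hX.mono (subset_insert _ _)) _ ?_ ?_
  · exact mul_pow_ne_one (hX p (mem_insert_self _ _)).2 (by simp) hk
  · exact coprime_orderOf_mul_pow hX hpP (by simp) k

lemma norm_sievedSum_one_sub_le {M : ℂ} {B E : ℝ} (hM : ‖∑ x, (1 : MulChar F ℂ) x * h x - M‖ ≤ E)
    (hB : ∀ χ : MulChar F ℂ, χ ≠ 1 → ‖∑ x, χ x * h x‖ ≤ B)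
    (hX : IsPrimeOrderFamily X P) :
    ‖sievedSum X 1 P h - (density P : ℂ) * M‖ ≤
      density P * E + (2 ^ P.card * density P - density P) * B := by
  induction P using Finset.induction_on with
  | empty => simpa [sievedSum, density] using hM
  | insert p P hpP ih =>
    have hp := (hX p (mem_insert_self _ _)).1
    have ih := ih (hX.mono (subset_insert _ _))
    have hsub := norm_sievedSum_one_insert_sub_le hB hX hpP
    have hmain := mul_le_mul_of_nonneg_left ih (one_sub_inv_nonneg hp)
    have htri := norm_add_le
      (sievedSum X 1 (insert p P) h - ((1 - 1 / (p : ℝ) : ℝ) : ℂ) * sievedSum X 1 P h)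
      (((1 - 1 / (p : ℝ) : ℝ) : ℂ) * (sievedSum X 1 P h - (density P : ℂ) * M))
    rw [norm_mul, Complex.norm_real, Real.norm_of_nonneg (one_sub_inv_nonneg hp)] at htri
    have hd : density (insert p P) = (1 - 1 / (p : ℝ)) * density P := by
      rw [density, prod_insert hpP, ← density]
    rw [hd, card_insert_of_notMem hpP, pow_succ]
    refine le_trans (le_of_eq ?_) (htri.trans (by linarith))
    congr 1
    push_cast
    ring

lemma sievedSum_one_eq_sum_mask : sievedSum X 1 P h = ∑ x, mask X P x * h x := rfl

lemma sum_mul_affine_swap {a c : F} (hc : c ≠ 0) (f g : F → ℂ) :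
    ∑ x, f x * g (a - c * x) = ∑ y, g y * f (a / c - 1 / c * y) := by
  symm
  rw [← Equiv.sum_comp ((Equiv.mulLeft₀ c hc).trans (Equiv.subLeft a))]
  refine sum_congr rfl fun x _ => ?_
  have hx : a / c - 1 / c * (a - c * x) = x := by field_simp; ring
  simp only [Equiv.trans_apply, Equiv.mulLeft₀_apply, Equiv.subLeft_apply, hx]
  ring

open Classical in
/-- The elements `x` such that `x` survives the sieve by `P` and `a - c * x` that by `Q`. -/
noncomputable def pairSet (X : ℕ → MulChar F ℂ) (a c : F) (P Q : Finset ℕ) : Finset F :=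
  {x | (x ≠ 0 ∧ ∀ p ∈ P, X p x ≠ 1) ∧ (a - c * x ≠ 0 ∧ ∀ p ∈ Q, X p (a - c * x) ≠ 1)}

lemma card_pairSet (a c : F) :
    ((pairSet X a c P Q).card : ℂ) = sievedSum X 1 P fun x => mask X Q (a - c * x) := by
  classical
  simp_rw [sievedSum_one_eq_sum_mask, mask_eq_ite, ite_zero_mul_ite_zero, mul_one, sum_boole,
    pairSet]

lemma card_pairSet_swap {a c : F} (hc : c ≠ 0) :
    (pairSet X a c P Q).card = (pairSet X (a / c) (1 / c) Q P).card := by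
  have : ((pairSet X a c P Q).card : ℂ) = (pairSet X (a / c) (1 / c) Q P).card := by
    simp_rw [card_pairSet, sievedSum_one_eq_sum_mask]
    exact sum_mul_affine_swap hc _ _
  exact_mod_cast this

lemma norm_sum_mulChar_mul_mask_le {a c : F} (ha : a ≠ 0) (hc : c ≠ 0)
    (hX : IsPrimeOrderFamily X P) (ψ : MulChar F ℂ) (hψ : ψ ≠ 1) :
    ‖∑ x, ψ x * mask X P (a - c * x)‖ ≤ 2 ^ P.card * density P * √(Fintype.card F) := by
  rw [sum_mul_affine_swap hc]
  exact norm_sievedSum_le (C := True) (fun χ _ => norm_sum_mulChar_mul_affine_le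
    (div_ne_zero ha hc) (one_div_ne_zero hc) fun _ => hψ) hX 1 (fun _ => trivial) (by simp)

lemma abs_card_pairSet_sub_le {a c : F} (ha : a ≠ 0) (hc : c ≠ 0)
    (hP : IsPrimeOrderFamily X P) (hQ : IsPrimeOrderFamily X Q) :
    |((pairSet X a c P Q).card : ℝ) - density P * density Q * (Fintype.card F - 2)| ≤
      (2 ^ P.card * 2 ^ Q.card - 1) * (density P * density Q) * √(Fintype.card F) := by
  have hinner : ‖∑ x, (1 : MulChar F ℂ) x * mask X Q (a - c * x) -
      (density Q : ℂ) * (Fintype.card F - 2)‖ ≤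
      density Q * 0 + (2 ^ Q.card * density Q - density Q) * √(Fintype.card F) := by
    rw [sum_mul_affine_swap hc]
    refine norm_sievedSum_one_sub_le ?_ (fun χ hχ => norm_sum_mulChar_mul_affine_le
      (div_ne_zero ha hc) (one_div_ne_zero hc) fun h1 => absurd h1 hχ) hQ
    rw [sum_one_mul_affine (div_ne_zero ha hc) (one_div_ne_zero hc), sub_self, norm_zero]
  have houter := norm_sievedSum_one_sub_le hinner
    (norm_sum_mulChar_mul_mask_le ha hc hQ) hP
  rw [← card_pairSet] at houter
  rw [← Real.norm_eq_abs, ← Complex.norm_real]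
  push_cast
  rw [mul_assoc]
  exact houter.trans (le_of_eq (by ring))

lemma abs_card_pairSet_insert_sub_le {a c : F} (ha : a ≠ 0) (hc : c ≠ 0)
    (hP : IsPrimeOrderFamily X (insert p P)) (hQ : IsPrimeOrderFamily X Q) (hpP : p ∉ P) :
    |((pairSet X a c (insert p P) Q).card : ℝ) - (1 - 1 / (p : ℝ)) * (pairSet X a c P Q).card| ≤
      (1 - 1 / (p : ℝ)) *
        (2 ^ P.card * 2 ^ Q.card * (density P * density Q) * √(Fintype.card F)) := by
  have hinc := norm_sievedSum_one_insert_sub_le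
    (norm_sum_mulChar_mul_mask_le ha hc hQ) hP hpP
  rw [← card_pairSet, ← card_pairSet] at hinc
  rw [← Real.norm_eq_abs, ← Complex.norm_real]
  push_cast at hinc ⊢
  exact hinc.trans (le_of_eq (by ring))

/-- The combinatorial sieve inequality: if no element survives the full sieve, then the partial
sieves remove everything. -/
lemma sum_card_pairSet_insert_le {T : Finset ℕ} {a c : F}
    (hempty : pairSet X a c (P ∪ T) (P ∪ T) = ∅) :
    ∑ p ∈ T, ((pairSet X a c (insert p P) P).card + (pairSet X a c P (insert p P)).card) +
      (pairSet X a c P P).card ≤ 2 * T.card * (pairSet X a c P P).card := by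
  classical
  set A := pairSet X a c P P with hA
  have hleft : ∀ p, pairSet X a c (insert p P) P ⊆ A := fun p x hx => by
    simp only [hA, pairSet, mem_filter, mem_univ, true_and, mem_insert] at hx ⊢
    exact ⟨⟨hx.1.1, fun r hr => hx.1.2 r (Or.inr hr)⟩, hx.2⟩
  have hright : ∀ p, pairSet X a c P (insert p P) ⊆ A := fun p x hx => by
    simp only [hA, pairSet, mem_filter, mem_univ, true_and, mem_insert] at hx ⊢
    exact ⟨hx.1, hx.2.1, fun r hr => hx.2.2 r (Or.inr hr)⟩
  have hcover : A ⊆ T.biUnion fun p =>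
      (A \ pairSet X a c (insert p P) P) ∪ (A \ pairSet X a c P (insert p P)) := by
    intro x hx
    by_contra hnot
    have hmem : x ∈ pairSet X a c (P ∪ T) (P ∪ T) := by
      simp only [mem_biUnion, mem_union, mem_sdiff, hx, true_and, not_exists, not_and, not_or,
        not_not] at hnot
      simp only [hA, pairSet, mem_filter, mem_univ, true_and, mem_insert, mem_union,
        forall_eq_or_imp] at hnot hx ⊢
      exact ⟨⟨hx.1.1, fun r hr => hr.elim (hx.1.2 r) fun h => (hnot r h).1.1.2.1⟩,
        hx.2.1, fun r hr => hr.elim (hx.2.2 r) fun h => (hnot r h).2.2.2.1⟩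
    rw [hempty] at hmem
    exact notMem_empty x hmem
  have hcard : A.card ≤ ∑ p ∈ T, ((A.card - (pairSet X a c (insert p P) P).card) +
      (A.card - (pairSet X a c P (insert p P)).card)) := by
    refine (card_le_card hcover).trans (card_biUnion_le.trans (sum_le_sum fun p _ => ?_))
    refine (card_union_le _ _).trans ?_
    rw [card_sdiff_of_subset (hleft p), card_sdiff_of_subset (hright p)]
  calc _ ≤ ∑ p ∈ T, ((pairSet X a c (insert p P) P).card +
        (pairSet X a c P (insert p P)).card) +
        ∑ p ∈ T, ((A.card - (pairSet X a c (insert p P) P).card) +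
          (A.card - (pairSet X a c P (insert p P)).card)) := Nat.add_le_add_left hcard _
    _ = ∑ p ∈ T, 2 * A.card := by
      rw [← sum_add_distrib]
      refine sum_congr rfl fun p _ => ?_
      have h1 := card_le_card (hleft p)
      have h2 := card_le_card (hright p)
      omega
    _ = _ := by
      rw [sum_const, smul_eq_mul]
      ring

/-- The sieve criterion: with `δ = 1 - 2 ∑ 1/p` over the sieving primes `p ∈ T`, some element
survives as soon as `√q > 4 ^ |P| * ((2 |T| - 1) / δ + 2)`. -/
theorem pairSet_nonempty {T : Finset ℕ} {a c : F} (ha : a ≠ 0) (hc : c ≠ 0)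
    (hX : IsPrimeOrderFamily X (P ∪ T)) (hPT : Disjoint P T)
    (hδ : 0 < 1 - 2 * ∑ p ∈ T, 1 / (p : ℝ)) (hq : 4 ≤ Fintype.card F)
    (hlarge : 4 ^ P.card * (2 * T.card - 1 + 2 * (1 - 2 * ∑ p ∈ T, 1 / (p : ℝ))) <
      (1 - 2 * ∑ p ∈ T, 1 / (p : ℝ)) * √(Fintype.card F)) :
    (pairSet X a c (P ∪ T) (P ∪ T)).Nonempty := by
  by_contra hempty
  rw [not_nonempty_iff_eq_empty] at hempty
  have hXP : IsPrimeOrderFamily X P := hX.mono subset_union_left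
  have hsieve := sum_card_pairSet_insert_le hempty
  have hmain := (abs_le.1 (abs_card_pairSet_sub_le ha hc hXP hXP)).1
  set s := √(Fintype.card F) with hs
  have hs2 : (2 : ℝ) ≤ s := Real.le_sqrt_of_sq_le (by norm_num; exact_mod_cast hq)
  have hsq : (Fintype.card F : ℝ) = s ^ 2 := (Real.sq_sqrt (Nat.cast_nonneg _)).symm
  have hd : 0 < density P := prod_pos fun r hr => by
    have : (1 : ℝ) < r := by exact_mod_cast (hXP r hr).1.one_lt
    rw [sub_pos, div_lt_one (by linarith)]
    exact this
  set A : ℝ := ((pairSet X a c P P).card : ℝ) with hA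
  have hw : (2 : ℝ) ^ P.card * 2 ^ P.card = 4 ^ P.card := by rw [← mul_pow]; norm_num
  rw [hw] at hmain
  set w : ℝ := 4 ^ P.card
  set D : ℝ := density P * density P
  have hD : 0 < D := mul_pos hd hd
  have hterm : ∀ r ∈ T, 2 * ((1 - 1 / (r : ℝ)) * (A - w * D * s)) ≤
      ((pairSet X a c (insert r P) P).card + (pairSet X a c P (insert r P)).card : ℝ) := by
    intro r hr
    have hrP : r ∉ P := disjoint_right.1 hPT hr
    have hXr : IsPrimeOrderFamily X (insert r P) :=
      hX.mono (insert_subset (mem_union_right _ hr) subset_union_left)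
    have h1 := (abs_le.1 (abs_card_pairSet_insert_sub_le ha hc hXr hXP hrP)).1
    have h2 := (abs_le.1 (abs_card_pairSet_insert_sub_le (div_ne_zero ha hc)
      (one_div_ne_zero hc) hXr hXP hrP)).1
    rw [← card_pairSet_swap hc, ← card_pairSet_swap hc] at h2
    rw [hw] at h1 h2
    linarith
  have hsum := sum_le_sum hterm
  rw [← mul_sum, ← sum_mul, sum_sub_distrib, sum_const, nsmul_eq_mul, mul_one] at hsum
  have hsieve' : ∑ r ∈ T, ((pairSet X a c (insert r P) P).card +
      (pairSet X a c P (insert r P)).card : ℝ) + A ≤ 2 * T.card * A := by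
    rw [hA]
    exact_mod_cast hsieve
  set σ : ℝ := ∑ p ∈ T, 1 / (p : ℝ)
  have hupper : (1 - 2 * σ) * A ≤ 2 * (T.card - σ) * (w * D * s) := by linarith
  have hlower : D * (s * (s - w)) ≤ A := by
    rw [hsq] at hmain
    nlinarith
  have hlow := mul_le_mul_of_nonneg_left hlower hδ.le
  have hDs : 0 < D * s := by positivity
  nlinarith

lemma exists_primeOrderFamily (F : Type) [Field F] [Fintype F] :
    ∃ X : ℕ → MulChar F ℂ, IsPrimeOrderFamily X (Fintype.card F - 1).primeFactors := by
  have hex : ∀ p : ℕ, ∃ χ : MulChar F ℂ,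
      p ∈ (Fintype.card F - 1).primeFactors → p.Prime ∧ orderOf χ = p := by
    intro p
    by_cases hp : p ∈ (Fintype.card F - 1).primeFactors
    · have hprime := Nat.prime_of_mem_primeFactors hp
      obtain ⟨χ, hχ⟩ := MulChar.exists_mulChar_orderOf F (Nat.dvd_of_mem_primeFactors hp)
        (Complex.isPrimitiveRoot_exp p hprime.ne_zero)
      exact ⟨χ, fun _ => ⟨hprime, hχ⟩⟩
    · exact ⟨1, fun h => absurd h hp⟩
  choose X hX using hex
  exact ⟨X, hX⟩

lemma exists_pow_eq_of_pow_div_eq_one {r : ℕ} (hr : r.Prime) (hdvd : r ∣ Fintype.card F - 1)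
    {x : F} (hx : x ≠ 0) (hpow : x ^ ((Fintype.card F - 1) / r) = 1) : ∃ y, y ^ r = x := by
  classical
  obtain ⟨g, hg⟩ := IsCyclic.exists_generator (α := Fˣ)
  obtain ⟨k, hk⟩ := Subgroup.mem_zpowers_iff.1 (hg (Units.mk0 x hx))
  have hord : orderOf g = Fintype.card F - 1 := by
    rw [orderOf_eq_card_of_forall_mem_zpowers hg, Nat.card_eq_fintype_card, Fintype.card_units]
  obtain ⟨m, hm⟩ := hdvd
  have hm0 : m ≠ 0 := by
    rintro rfl
    have := Fintype.one_lt_card (α := F)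
    omega
  have hgpow : g ^ (k * m) = 1 := by
    rw [hm, Nat.mul_div_cancel_left _ hr.pos] at hpow
    rw [zpow_mul, hk, zpow_natCast]
    exact Units.ext (by simpa using hpow)
  have hdvd' := orderOf_dvd_iff_zpow_eq_one.2 hgpow
  rw [hord, hm, Nat.cast_mul] at hdvd'
  obtain ⟨l, hl⟩ := Int.dvd_of_mul_dvd_mul_right (by exact_mod_cast hm0) hdvd'
  refine ⟨((g ^ l : Fˣ) : F), ?_⟩
  rw [← Units.val_pow_eq_pow_val, ← zpow_natCast, ← zpow_mul, mul_comm, ← hl, hk, Units.val_mk0]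

lemma orderOf_eq_card_sub_one
    (hX : IsPrimeOrderFamily X (Fintype.card F - 1).primeFactors) {x : F} (hx : x ≠ 0)
    (hne : ∀ p ∈ (Fintype.card F - 1).primeFactors, X p x ≠ 1) :
    orderOf x = Fintype.card F - 1 := by
  have hcard := Fintype.one_lt_card (α := F)
  refine orderOf_eq_of_pow_and_pow_div_prime (by omega)
    (FiniteField.pow_card_sub_one_eq_one x hx) fun r hr hdvd hpow => ?_
  have hmem : r ∈ (Fintype.card F - 1).primeFactors :=
    Nat.mem_primeFactors.2 ⟨hr, hdvd, by omega⟩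
  obtain ⟨y, rfl⟩ := exists_pow_eq_of_pow_div_eq_one hr hdvd hx hpow
  refine hne r hmem ?_
  have hy : y ≠ 0 := by
    rintro rfl
    exact hx (zero_pow hr.ne_zero)
  have hXr : X r ^ r = 1 := orderOf_dvd_iff_pow_eq_one.1 (hX r hmem).2.dvd
  rw [map_pow, ← MulChar.pow_apply' _ hr.ne_zero, hXr, MulChar.one_apply hy.isUnit]

lemma le_prime_of_lt {m n b : ℕ} (hn : n.Prime) (hmn : m < n)
    (hb : ∀ k ∈ Ioo m b, ¬ k.Prime) : b ≤ n := by
  by_contra hcon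
  exact hb n (mem_Ioo.2 ⟨hmn, by omega⟩) hn

/-- Splitting eight primes into the three smallest and the five largest. -/
lemma exists_split_of_card_eq_eight {S : Finset ℕ} (hS : ∀ p ∈ S, p.Prime) (hcard : S.card = 8) :
    ∃ P T : Finset ℕ, P ∪ T = S ∧ Disjoint P T ∧ P.card = 3 ∧ T.card = 5 ∧
      ∑ p ∈ T, 1 / (p : ℝ) ≤ 1 / 7 + (1 / 11 + (1 / 13 + (1 / 17 + 1 / 19))) := by
  let f := S.orderEmbOfFin hcard
  have hprime : ∀ i, (f i).Prime := fun i => hS _ (S.orderEmbOfFin_mem hcard i)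
  have hlt : ∀ i j : Fin 8, i < j → f i < f j := fun i j hij => f.strictMono hij
  have h0 : 2 ≤ f 0 := (hprime 0).two_le
  have h1 : 3 ≤ f 1 := h0.trans_lt (hlt 0 1 (by decide))
  have h2 : 5 ≤ f 2 :=
    le_prime_of_lt (m := 3) (hprime 2) (h1.trans_lt (hlt 1 2 (by decide))) (by decide)
  have h3 : 7 ≤ f 3 :=
    le_prime_of_lt (m := 5) (hprime 3) (h2.trans_lt (hlt 2 3 (by decide))) (by decide)
  have h4 : 11 ≤ f 4 :=
    le_prime_of_lt (m := 7) (hprime 4) (h3.trans_lt (hlt 3 4 (by decide))) (by decide)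
  have h5 : 13 ≤ f 5 :=
    le_prime_of_lt (m := 11) (hprime 5) (h4.trans_lt (hlt 4 5 (by decide))) (by decide)
  have h6 : 17 ≤ f 6 :=
    le_prime_of_lt (m := 13) (hprime 6) (h5.trans_lt (hlt 5 6 (by decide))) (by decide)
  have h7 : 19 ≤ f 7 :=
    le_prime_of_lt (m := 17) (hprime 7) (h6.trans_lt (hlt 6 7 (by decide))) (by decide)
  refine ⟨({0, 1, 2} : Finset (Fin 8)).map f.toEmbedding,
    ({3, 4, 5, 6, 7} : Finset (Fin 8)).map f.toEmbedding, ?_, ?_, ?_, ?_, ?_⟩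
  · rw [← map_union, ← S.map_orderEmbOfFin_univ hcard]
    rfl
  · rw [disjoint_map]
    decide
  · rw [card_map]
    rfl
  · rw [card_map]
    rfl
  · rw [sum_map, sum_insert (by decide), sum_insert (by decide), sum_insert (by decide),
      sum_insert (by decide), sum_singleton]
    refine add_le_add ?_ (add_le_add ?_ (add_le_add ?_ (add_le_add ?_ ?_))) <;>
    · refine one_div_le_one_div_of_le (by norm_num) ?_
      first
        | exact_mod_cast h3
        | exact_mod_cast h4
        | exact_mod_cast h5
        | exact_mod_cast h6
        | exact_mod_cast h7

end PrimitiveRootSum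

/-- Every prime power `q` with `ω(q-1) = 8` (i.e. `q - 1` has exactly `8` distinct prime
factors) and `q > 14647129` lies in `𝒢`. -/
theorem memG_of_omega_eq_eight (q : ℕ) (hq : IsPrimePow q)
    (hω : (q - 1).primeFactors.card = 8) (h : 14647129 < q) : memG q := by
  refine ⟨hq, fun F _ _ hF a c ha hc => ?_⟩
  subst hF
  obtain ⟨P, T, hunion, hdisj, hP, hT, hsum⟩ := PrimitiveRootSum.exists_split_of_card_eq_eight
    (fun _ => Nat.prime_of_mem_primeFactors) hω
  obtain ⟨X, hX⟩ := PrimitiveRootSum.exists_primeOrderFamily F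
  have hδ : (50345 / 323323 : ℝ) ≤ 1 - 2 * ∑ p ∈ T, 1 / (p : ℝ) := by
    norm_num at hsum ⊢
    linarith
  have hsqrt : (3827.15678 : ℝ) ≤ √(Fintype.card F) := by
    have hcard : (14647130 : ℝ) ≤ Fintype.card F := by exact_mod_cast h
    exact Real.le_sqrt_of_sq_le (le_trans (by norm_num) hcard)
  obtain ⟨g, hg⟩ := PrimitiveRootSum.pairSet_nonempty (X := X) (P := P) (T := T) ha hc
    (hunion ▸ hX) hdisj (lt_of_lt_of_le (by norm_num) hδ) (by omega) (by
      rw [hP, hT]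
      push_cast
      nlinarith)
  rw [hunion] at hg
  simp only [PrimitiveRootSum.pairSet, mem_filter, mem_univ, true_and] at hg
  exact ⟨g, PrimitiveRootSum.orderOf_eq_card_sub_one hX hg.1.1 hg.1.2,
    PrimitiveRootSum.orderOf_eq_card_sub_one hX hg.2.1 hg.2.2⟩
end

section
/- The prime q = 13123111 = 2·3·5·7·11·13·19·23 + 1 lies in G; that is, for all non-zero a, c in the field with 13123111 elements there exists a primitive root g such that a − c·g is also a primitive root. -/
open Finset

namespace PrimitiveRootSieve

variable {F : Type*} [Field F]

/-- The element `x` is `p`-free if some complex multiplicative character of exponent `p` does not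
take the value `1` at `x`. For non-zero `x` and `p ∣ #F - 1` this says that `x` is not a `p`-th
power. -/
def IsFree (p : ℕ) (x : F) : Prop :=
  ∃ χ : MulChar F ℂ, χ ^ p = 1 ∧ χ x ≠ 1

open Classical in
/-- The indicator function of the `p`-free elements. -/
noncomputable def freeInd (p : ℕ) (x : F) : ℝ := if IsFree p x then 1 else 0

/-- On the non-zero elements, `f` is a linear combination of multiplicative characters of
exponent `e`, in which the trivial character has coefficient `m` and the absolute values of the
coefficients add up to at most `n`. -/
def HasCharExpansion [Fintype (MulChar F ℂ)] (e : ℕ) (m n : ℝ) (f : F → ℝ) : Prop :=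
  ∃ c : MulChar F ℂ → ℂ, (∀ χ, c χ ≠ 0 → χ ^ e = 1) ∧ c 1 = m ∧ ∑ χ, ‖c χ‖ ≤ n ∧
    ∀ x ≠ 0, (f x : ℂ) = ∑ χ, c χ * χ x

namespace HasCharExpansion

variable [Fintype (MulChar F ℂ)] {e e₁ e₂ : ℕ} {m n m₁ n₁ m₂ n₂ : ℝ} {f g : F → ℝ}

lemma add_const (hf : HasCharExpansion e m n f) (r : ℝ) :
    HasCharExpansion e (m + r) (n + |r|) (fun x ↦ f x + r) := by
  classical
  obtain ⟨c, hsupp, hone, hnorm, heq⟩ := hf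
  refine ⟨fun χ ↦ c χ + if χ = 1 then (r : ℂ) else 0, fun χ hχ ↦ ?_, ?_, ?_, fun x hx ↦ ?_⟩
  · by_cases h : χ = 1
    · rw [h, one_pow]
    · exact hsupp χ (by simpa [h] using hχ)
  · simp [hone]
  · calc ∑ χ, ‖c χ + if χ = 1 then (r : ℂ) else 0‖
        ≤ ∑ χ, (‖c χ‖ + if χ = 1 then |r| else 0) := by
          refine sum_le_sum fun χ _ ↦ (norm_add_le _ _).trans ?_
          split_ifs <;> simp
      _ ≤ n + |r| := by
          rw [sum_add_distrib, sum_ite_eq' univ (1 : MulChar F ℂ)]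
          simpa using hnorm
  · simp [add_mul, sum_add_distrib, heq x hx, MulChar.one_apply hx.isUnit]

lemma one : HasCharExpansion 1 1 1 (fun _ : F ↦ 1) := by
  have h : HasCharExpansion 1 0 0 (fun _ : F ↦ 0) := ⟨0, by simp, by simp, by simp, by simp⟩
  simpa using h.add_const 1

lemma mul (hf : HasCharExpansion e₁ m₁ n₁ f) (hg : HasCharExpansion e₂ m₂ n₂ g)
    (he : e₁.Coprime e₂) :
    HasCharExpansion (e₁ * e₂) (m₁ * m₂) (n₁ * n₂) (fun x ↦ f x * g x) := by
  obtain ⟨c, hcsupp, hcone, hcnorm, hceq⟩ := hf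
  obtain ⟨d, hdsupp, hdone, hdnorm, hdeq⟩ := hg
  refine ⟨fun χ ↦ ∑ ψ, c ψ * d (ψ⁻¹ * χ), fun χ hχ ↦ ?_, ?_, ?_, fun x hx ↦ ?_⟩
  · obtain ⟨ψ, -, hψ⟩ := exists_ne_zero_of_sum_ne_zero hχ
    have h₁ := hcsupp ψ (left_ne_zero_of_mul hψ)
    have h₂ := hdsupp _ (right_ne_zero_of_mul hψ)
    rw [← mul_inv_cancel_left ψ χ, mul_pow, pow_mul, h₁, one_pow, mul_comm e₁, pow_mul, h₂,
      one_pow, one_mul]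
  · beta_reduce
    rw [sum_eq_single_of_mem 1 (mem_univ _)]
    · simp [hcone, hdone]
    · intro ψ _ hψ
      by_contra h
      have h₁ := hcsupp ψ (left_ne_zero_of_mul h)
      have h₂ := hdsupp _ (right_ne_zero_of_mul h)
      rw [mul_one, inv_pow, inv_eq_one] at h₂
      refine hψ (orderOf_eq_one_iff.mp (Nat.eq_one_of_dvd_coprimes he ?_ ?_))
      · exact orderOf_dvd_of_pow_eq_one h₁
      · exact orderOf_dvd_of_pow_eq_one h₂
  · calc ∑ χ, ‖∑ ψ, c ψ * d (ψ⁻¹ * χ)‖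
        ≤ ∑ χ, ∑ ψ, ‖c ψ‖ * ‖d (ψ⁻¹ * χ)‖ :=
          sum_le_sum fun χ _ ↦ (norm_sum_le _ _).trans_eq (by simp)
      _ = ∑ ψ, ‖c ψ‖ * ∑ χ, ‖d χ‖ := by
          rw [sum_comm]
          refine sum_congr rfl fun ψ _ ↦ ?_
          rw [← mul_sum]
          exact congrArg _ (Equiv.sum_comp (Equiv.mulLeft ψ⁻¹) fun χ ↦ ‖d χ‖)
      _ ≤ n₁ * n₂ := by
          rw [← sum_mul]
          exact mul_le_mul hcnorm hdnorm (sum_nonneg fun _ _ ↦ norm_nonneg _)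
            ((sum_nonneg fun _ _ ↦ norm_nonneg _).trans hcnorm)
  · push_cast
    simp_rw [hceq x hx, hdeq x hx, sum_mul]
    rw [sum_comm]
    refine sum_congr rfl fun ψ _ ↦ ?_
    rw [← Equiv.sum_comp (Equiv.mulLeft ψ⁻¹) fun χ ↦ d χ * χ x, mul_sum]
    refine sum_congr rfl fun χ _ ↦ ?_
    have h : ψ x * ψ⁻¹ x = 1 := by
      rw [← MulChar.mul_apply, mul_inv_cancel, MulChar.one_apply hx.isUnit]
    rw [Equiv.coe_mulLeft, MulChar.mul_apply]
    linear_combination (c ψ * d (ψ⁻¹ * χ) * χ x) * h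

lemma prod (S : Finset ℕ) (hS : (S : Set ℕ).Pairwise Nat.Coprime) {μ ν : ℕ → ℝ} {φ : ℕ → F → ℝ}
    (h : ∀ p ∈ S, HasCharExpansion p (μ p) (ν p) (φ p)) :
    HasCharExpansion (∏ p ∈ S, p) (∏ p ∈ S, μ p) (∏ p ∈ S, ν p) (fun x ↦ ∏ p ∈ S, φ p x) := by
  classical
  induction S using Finset.induction_on with
  | empty => simpa using one
  | insert p S hp ih =>
    simp_rw [prod_insert hp]
    refine (h p (mem_insert_self p S)).mul (ih (hS.mono (by simp)) fun r hr ↦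
      h r (mem_insert_of_mem hr)) (Nat.Coprime.prod_right fun r hr ↦ ?_)
    exact hS (by simp) (by simp [hr]) (by rintro rfl; exact hp hr)

end HasCharExpansion

section Finite

variable [Fintype F]

lemma norm_apply_eq_one (χ : MulChar F ℂ) {x : F} (hx : x ≠ 0) : ‖χ x‖ = 1 := by
  refine Complex.norm_eq_one_of_pow_eq_one (n := Fintype.card F - 1) ?_
    (Nat.sub_pos_of_lt Fintype.one_lt_card).ne'
  rw [← map_pow, FiniteField.pow_card_sub_one_eq_one x hx, map_one]

/-- A Jacobi sum of two characters, not both trivial, is at most `√q` in absolute value. -/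
lemma norm_jacobiSum_le (χ ψ : MulChar F ℂ) (h : ¬(χ = 1 ∧ ψ = 1)) :
    ‖jacobiSum χ ψ‖ ≤ √(Fintype.card F) := by
  have hone : 1 ≤ √(Fintype.card F : ℝ) :=
    Real.one_le_sqrt.mpr (mod_cast Fintype.card_pos)
  by_cases hχ : χ = 1
  · rw [hχ, jacobiSum_one_nontrivial fun hψ ↦ h ⟨hχ, hψ⟩]
    simpa using hone
  by_cases hψ : ψ = 1
  · rw [hψ, jacobiSum_comm, jacobiSum_one_nontrivial hχ]
    simpa using hone
  by_cases hχψ : χ * ψ = 1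
  · rw [eq_inv_of_mul_eq_one_right hχψ, jacobiSum_nontrivial_inv hχ, norm_neg]
    rwa [norm_apply_eq_one χ (neg_ne_zero.mpr one_ne_zero)]
  have hconj : jacobiSum χ⁻¹ ψ⁻¹ = star (jacobiSum χ ψ) := by
    simp_rw [jacobiSum, star_sum, star_mul', MulChar.star_apply']
  have hchar : ringChar ℂ ≠ ringChar F := by
    rw [ringChar.eq_zero]
    exact (CharP.ringChar_ne_zero_of_finite F).symm
  have hmul := jacobiSum_mul_jacobiSum_inv hchar hχ hψ hχψ
  rw [hconj, RCLike.star_def, Complex.mul_conj, Complex.normSq_eq_norm_sq] at hmul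
  have hsq : ‖jacobiSum χ ψ‖ ^ 2 = Fintype.card F := by exact_mod_cast hmul
  exact Real.le_sqrt_of_sq_le hsq.le

lemma card_pow_eq_one [Fintype (MulChar F ℂ)] [DecidableEq (MulChar F ℂ)] {p : ℕ}
    (hp : p.Prime) (hdvd : p ∣ Fintype.card F - 1) :
    #{χ : MulChar F ℂ | χ ^ p = 1} = p := by
  have hcyc : IsCyclic (MulChar F ℂ) :=
    isCyclic_of_injective (MulChar.mulEquiv_units F ℂ).some.toMonoidHom
      (MulChar.mulEquiv_units F ℂ).some.injective
  refine le_antisymm (IsCyclic.card_pow_eq_one_le hp.pos) ?_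
  obtain ⟨χ, hχ⟩ := MulChar.exists_mulChar_orderOf F hdvd
    (Complex.isPrimitiveRoot_exp p hp.ne_zero)
  calc p = #((range p).image (χ ^ ·)) := by
        rw [card_image_of_injOn, card_range]
        rw [← hχ]
        simpa using pow_injOn_Iio_orderOf (x := χ)
    _ ≤ _ := by
        refine card_le_card fun ψ hψ ↦ ?_
        obtain ⟨k, -, rfl⟩ := mem_image.mp hψ
        rw [mem_filter_univ, pow_right_comm, ← hχ, pow_orderOf_eq_one, one_pow]

lemma sum_apply_pow_eq_one [Fintype (MulChar F ℂ)] [DecidableEq (MulChar F ℂ)] {p : ℕ}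
    (hp : p.Prime) (hdvd : p ∣ Fintype.card F - 1) (x : F) :
    ∑ χ : MulChar F ℂ with χ ^ p = 1, χ x = p * (1 - freeInd p x) := by
  unfold freeInd
  split_ifs with hx
  · obtain ⟨ψ, hψ, hψx⟩ := hx
    have h : ψ x * ∑ χ : MulChar F ℂ with χ ^ p = 1, χ x =
        ∑ χ : MulChar F ℂ with χ ^ p = 1, χ x := by
      rw [mul_sum]
      refine sum_equiv (Equiv.mulLeft ψ) (by simp [mul_pow, hψ]) (by simp)
    have h' : (ψ x - 1) * ∑ χ : MulChar F ℂ with χ ^ p = 1, χ x = 0 := by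
      rw [sub_mul, h, one_mul, sub_self]
    simpa using (mul_eq_zero.mp h').resolve_left (sub_ne_zero.mpr hψx)
  · have h : ∀ χ ∈ ({χ : MulChar F ℂ | χ ^ p = 1} : Finset _), χ x = 1 := by
      intro χ hχ
      by_contra hne
      exact hx ⟨χ, by simpa using hχ, hne⟩
    rw [sum_congr rfl h]
    simp [card_pow_eq_one hp hdvd]

lemma hasCharExpansion_freeInd_sub [Fintype (MulChar F ℂ)] {p : ℕ} (hp : p.Prime)
    (hdvd : p ∣ Fintype.card F - 1) :
    HasCharExpansion p 0 (1 - 1 / p) (fun x : F ↦ freeInd p x - (1 - 1 / p)) := by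
  classical
  have hp0 : (p : ℝ) ≠ 0 := mod_cast hp.ne_zero
  have hp0' : (p : ℂ) ≠ 0 := mod_cast hp.ne_zero
  have hmem : (1 : MulChar F ℂ) ∈ ({χ | χ ^ p = 1} : Finset (MulChar F ℂ)) := by simp
  refine ⟨fun χ ↦ if χ ∈ ({χ | χ ^ p = 1} : Finset (MulChar F ℂ)).erase 1 then -1 / p else 0,
    fun χ hχ ↦ ?_, by simp, ?_, fun x hx ↦ ?_⟩
  · have := (ite_ne_right_iff.mp hχ).1
    simp_all
  · simp_rw [apply_ite norm, norm_zero, sum_ite_mem, univ_inter, sum_const,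
      card_erase_of_mem hmem, card_pow_eq_one hp hdvd, nsmul_eq_mul, Nat.cast_pred hp.pos]
    apply le_of_eq
    simp
    field_simp
  · simp_rw [ite_mul, zero_mul, sum_ite_mem, univ_inter, ← mul_sum]
    have h := add_sum_erase _ (fun χ : MulChar F ℂ ↦ χ x) hmem
    rw [sum_apply_pow_eq_one hp hdvd, MulChar.one_apply hx.isUnit] at h
    rw [eq_sub_of_add_eq' h]
    push_cast
    field_simp
    ring

lemma hasCharExpansion_freeInd [Fintype (MulChar F ℂ)] {p : ℕ} (hp : p.Prime)
    (hdvd : p ∣ Fintype.card F - 1) :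
    HasCharExpansion p (1 - 1 / p) (2 * (1 - 1 / p)) (freeInd p : F → ℝ) := by
  have hp1 : (1 : ℝ) / p ≤ 1 := by
    rw [div_le_one (mod_cast hp.pos)]
    exact_mod_cast hp.one_le
  have h := (hasCharExpansion_freeInd_sub hp hdvd).add_const (1 - 1 / p)
  rw [abs_of_nonneg (by linarith), ← two_mul, zero_add] at h
  simpa using h

/-- The sum of two functions with known character expansions along the line `u / b + v / a = 1`. -/
lemma HasCharExpansion.abs_sum_sub_le [DecidableEq F] [Fintype (MulChar F ℂ)] {e₁ e₂ : ℕ}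
    {m₁ n₁ m₂ n₂ : ℝ} {f g : F → ℝ} (hf : HasCharExpansion e₁ m₁ n₁ f)
    (hg : HasCharExpansion e₂ m₂ n₂ g) {a b : F} (ha : a ≠ 0) (hb : b ≠ 0) :
    |∑ x ∈ univ \ {0, 1}, f (b * x) * g (a * (1 - x)) - m₁ * m₂ * (Fintype.card F - 2)| ≤
      n₁ * n₂ * √(Fintype.card F) := by
  classical
  obtain ⟨c, -, hcone, hcnorm, hceq⟩ := hf
  obtain ⟨d, -, hdone, hdnorm, hdeq⟩ := hg
  let t : MulChar F ℂ × MulChar F ℂ → ℂ := fun χ ↦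
    c χ.1 * d χ.2 * (χ.1 b * χ.2 a) * jacobiSum χ.1 χ.2
  have hsum : ((∑ x ∈ univ \ {0, 1}, f (b * x) * g (a * (1 - x)) : ℝ) : ℂ) = ∑ χ, t χ := by
    simp_rw [t, jacobiSum_eq_sum_sdiff, mul_sum]
    push_cast
    rw [sum_comm]
    refine sum_congr rfl fun x hx ↦ ?_
    simp only [mem_sdiff, mem_univ, mem_insert, mem_singleton, not_or, true_and] at hx
    rw [hceq _ (mul_ne_zero hb hx.1), hdeq _ (mul_ne_zero ha (sub_ne_zero.mpr (Ne.symm hx.2))),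
      sum_mul_sum, Fintype.sum_prod_type]
    refine sum_congr rfl fun χ _ ↦ sum_congr rfl fun ψ _ ↦ ?_
    rw [map_mul, map_mul]
    ring
  have hmain : t (1, 1) = ((m₁ * m₂ * (Fintype.card F - 2) : ℝ) : ℂ) := by
    simp [t, hcone, hdone, jacobiSum_one_one, MulChar.one_apply ha.isUnit,
      MulChar.one_apply hb.isUnit]
  rw [← Real.norm_eq_abs, ← Complex.norm_real, Complex.ofReal_sub, hsum, ← hmain,
    ← add_sum_erase univ t (mem_univ (1, 1)), add_sub_cancel_left]
  calc ‖∑ χ ∈ univ.erase (1, 1), t χ‖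
      ≤ ∑ χ ∈ univ.erase ((1, 1) : MulChar F ℂ × MulChar F ℂ),
          ‖c χ.1‖ * ‖d χ.2‖ * √(Fintype.card F) := by
        refine norm_sum_le_of_le _ fun χ hχ ↦ ?_
        simp only [t, norm_mul, norm_apply_eq_one _ ha, norm_apply_eq_one _ hb, mul_one]
        gcongr
        refine norm_jacobiSum_le _ _ fun h ↦ (mem_erase.mp hχ).1 (Prod.ext h.1 h.2)
    _ ≤ ∑ χ : MulChar F ℂ × MulChar F ℂ, ‖c χ.1‖ * ‖d χ.2‖ * √(Fintype.card F) :=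
        sum_le_sum_of_subset_of_nonneg (erase_subset _ _) fun _ _ _ ↦ by positivity
    _ = (∑ χ, ‖c χ‖) * (∑ ψ, ‖d ψ‖) * √(Fintype.card F) := by
        rw [← sum_mul, Fintype.sum_prod_type, sum_mul_sum]
    _ ≤ n₁ * n₂ * √(Fintype.card F) := by
        have := (sum_nonneg fun χ _ ↦ norm_nonneg (c χ)).trans hcnorm
        gcongr

/-- The prime sieve: the primes in `S` form the core, and those in `T` are sieved out. -/
theorem exists_isFree (S T : Finset ℕ) (hST : Disjoint S T)
    (hprime : ∀ p ∈ S ∪ T, p.Prime) (hdvd : ∀ p ∈ S ∪ T, p ∣ Fintype.card F - 1)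
    (hbound : 4 ^ #S * (2 * #T - 1 + 2 * (1 - 2 * ∑ p ∈ T, (1 / p : ℝ))) * √(Fintype.card F) <
      (1 - 2 * ∑ p ∈ T, (1 / p : ℝ)) * (Fintype.card F - 2))
    (hδ : 0 ≤ 1 - 2 * ∑ p ∈ T, (1 / p : ℝ))
    {a b : F} (ha : a ≠ 0) (hb : b ≠ 0) :
    ∃ x : F, x ≠ 0 ∧ x ≠ 1 ∧ ∀ p ∈ S ∪ T, IsFree p (b * x) ∧ IsFree p (a * (1 - x)) := by
  classical
  let _ : Fintype (MulChar F ℂ) := Fintype.ofFinite _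
  by_contra! hno
  set δ : ℝ := 1 - 2 * ∑ p ∈ T, (1 / p : ℝ) with hδdef
  set s : ℝ := √(Fintype.card F)
  let E : F → ℝ := fun x ↦ ∏ p ∈ S, freeInd p x
  let D : ℕ → F → ℝ := fun p x ↦ freeInd p x - (1 - 1 / p)
  let θ : ℝ := ∏ p ∈ S, (1 - 1 / p : ℝ)
  have hθ : 0 < θ := prod_pos fun p hp ↦ by
    have := (hprime p (mem_union_left _ hp)).one_lt
    rw [sub_pos, div_lt_one] <;> norm_cast
    lia
  have hcop : ((S ∪ T : Finset ℕ) : Set ℕ).Pairwise Nat.Coprime := fun p hp r hr hne ↦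
    (Nat.coprime_primes (hprime p hp) (hprime r hr)).mpr hne
  have hE : HasCharExpansion (∏ p ∈ S, p) θ (2 ^ #S * θ) E := by
    have := HasCharExpansion.prod (F := F) S (hcop.mono (by simp)) fun p hp ↦
      hasCharExpansion_freeInd (hprime p (mem_union_left _ hp)) (hdvd p (mem_union_left _ hp))
    rwa [prod_mul_distrib, prod_const] at this
  have hED (p : ℕ) (hp : p ∈ T) : HasCharExpansion ((∏ p ∈ S, p) * p) 0
      (2 ^ #S * θ * (1 - 1 / p)) (fun x ↦ E x * D p x) := by
    have := hE.mul (hasCharExpansion_freeInd_sub (hprime p (mem_union_right _ hp))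
      (hdvd p (mem_union_right _ hp))) (Nat.Coprime.prod_left fun r hr ↦
        hcop (by simp [hr]) (by simp [hp]) (by rintro rfl; exact disjoint_left.mp hST hr hp))
    rwa [mul_zero] at this
  have hE_nonneg (x : F) : 0 ≤ E x := prod_nonneg fun p _ ↦ by
    unfold freeInd; split_ifs <;> simp
  have hfree_le (p : ℕ) (x : F) : freeInd p x ≤ 1 := by
    unfold freeInd; split_ifs <;> simp
  have hpoint : ∀ x ∈ univ \ {(0 : F), 1}, E (b * x) * E (a * (1 - x)) *
      (∑ p ∈ T, (freeInd p (b * x) + freeInd p (a * (1 - x))) - (2 * #T - 1)) ≤ 0 := by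
    intro x hx
    simp only [mem_sdiff, mem_univ, mem_insert, mem_singleton, not_or, true_and] at hx
    obtain ⟨p, hp, hpx⟩ := hno x hx.1 hx.2
    have hfail : freeInd p (b * x) = 0 ∨ freeInd p (a * (1 - x)) = 0 := by
      unfold freeInd
      by_cases h : IsFree p (b * x)
      · exact .inr (if_neg (hpx h))
      · exact .inl (if_neg h)
    rcases mem_union.mp hp with hpS | hpT
    · rcases hfail with h | h
      · rw [show E (b * x) = 0 from prod_eq_zero hpS h]; simp
      · rw [show E (a * (1 - x)) = 0 from prod_eq_zero hpS h]; simp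
    · refine mul_nonpos_of_nonneg_of_nonpos (mul_nonneg (hE_nonneg _) (hE_nonneg _)) ?_
      have h₁ : freeInd p (b * x) + freeInd p (a * (1 - x)) ≤ 1 := by
        rcases hfail with h | h <;> rw [h] <;> simp [hfree_le]
      have h₂ : ∑ r ∈ T.erase p, (freeInd r (b * x) + freeInd r (a * (1 - x))) ≤
          ∑ r ∈ T.erase p, 2 :=
        sum_le_sum fun r _ ↦ by linarith [hfree_le r (b * x), hfree_le r (a * (1 - x))]
      rw [sum_const, card_erase_of_mem hpT, nsmul_eq_mul,
        Nat.cast_pred (card_pos.mpr ⟨p, hpT⟩)] at h₂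
      rw [← add_sum_erase _ _ hpT]
      linarith
  have hsplit : ∑ x ∈ univ \ {(0 : F), 1}, E (b * x) * E (a * (1 - x)) *
        (∑ p ∈ T, (freeInd p (b * x) + freeInd p (a * (1 - x))) - (2 * #T - 1)) =
      ∑ p ∈ T, (∑ x ∈ univ \ {(0 : F), 1}, (E (b * x) * D p (b * x)) * E (a * (1 - x)) +
        ∑ x ∈ univ \ {(0 : F), 1}, E (b * x) * (E (a * (1 - x)) * D p (a * (1 - x)))) +
      δ * ∑ x ∈ univ \ {(0 : F), 1}, E (b * x) * E (a * (1 - x)) := by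
    simp_rw [← sum_add_distrib]
    rw [sum_comm, mul_sum, ← sum_add_distrib]
    refine sum_congr rfl fun x _ ↦ ?_
    have hD : ∑ p ∈ T, (freeInd p (b * x) + freeInd p (a * (1 - x))) - (2 * #T - 1) =
        ∑ p ∈ T, (D p (b * x) + D p (a * (1 - x))) + δ := by
      simp only [D, sum_add_distrib, sum_sub_distrib, sum_const, nsmul_eq_mul, hδdef]
      ring
    rw [hD, mul_add, mul_sum, mul_comm δ]
    exact congrArg (· + _) (sum_congr rfl fun p _ ↦ by ring)
  have h4 : (4 : ℝ) ^ #S = 2 ^ #S * 2 ^ #S := by rw [← mul_pow]; norm_num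
  have hT : ∑ p ∈ T, -(2 * (4 ^ #S * θ ^ 2 * s) * (1 - 1 / p)) ≤
      ∑ p ∈ T, (∑ x ∈ univ \ {(0 : F), 1}, (E (b * x) * D p (b * x)) * E (a * (1 - x)) +
        ∑ x ∈ univ \ {(0 : F), 1}, E (b * x) * (E (a * (1 - x)) * D p (a * (1 - x)))) := by
    refine sum_le_sum fun p hp ↦ ?_
    have h₁ := neg_le_of_abs_le ((hED p hp).abs_sum_sub_le hE ha hb)
    have h₂ := neg_le_of_abs_le (hE.abs_sum_sub_le (hED p hp) ha hb)
    rw [h4]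
    linarith
  have hS := neg_le_of_abs_le (hE.abs_sum_sub_le hE ha hb)
  have hsum := sum_nonpos hpoint
  rw [hsplit] at hsum
  simp only [sum_neg_distrib, ← mul_sum, sum_sub_distrib, sum_const, nsmul_eq_mul, mul_one] at hT
  have hS' := mul_le_mul_of_nonneg_left hS hδ
  have hfinal := mul_lt_mul_of_pos_left hbound (pow_pos hθ 2)
  have hrecip : ∑ p ∈ T, (1 / p : ℝ) = (1 - δ) / 2 := by rw [hδdef]; ring
  rw [hrecip] at hT
  rw [h4] at hT hfinal
  linarith

/-- An element which is `p`-free for all primes `p ∣ q - 1` is a primitive root. -/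
lemma orderOf_eq_of_isFree {u : F} (hu : u ≠ 0)
    (h : ∀ p, p.Prime → p ∣ Fintype.card F - 1 → IsFree p u) :
    orderOf u = Fintype.card F - 1 := by
  refine orderOf_eq_of_pow_and_pow_div_prime (Nat.sub_pos_of_lt Fintype.one_lt_card)
    (FiniteField.pow_card_sub_one_eq_one u hu) fun p hp hdvd hpow ↦ ?_
  obtain ⟨χ, hχ, hne⟩ := h p hp hdvd
  obtain ⟨g, hg⟩ := IsCyclic.exists_generator (α := Fˣ)
  obtain ⟨k, hk⟩ := (mem_powers_iff_mem_zpowers.mpr (hg (Units.mk0 u hu)))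
  have hord : orderOf g = Fintype.card F - 1 := by
    rw [orderOf_eq_card_of_forall_mem_zpowers hg, Nat.card_units, Nat.card_eq_fintype_card]
  have hgk : (g : F) ^ k = u := by simpa using congrArg Units.val hk
  obtain ⟨r, hr⟩ := hdvd
  have hr0 : 0 < r := by
    have := Nat.sub_pos_of_lt (Fintype.one_lt_card (α := F))
    exact Nat.pos_of_mul_pos_left (hr ▸ this)
  have hpk : p ∣ k := by
    rw [hr, Nat.mul_div_cancel_left r hp.pos, ← hgk, ← pow_mul] at hpow
    have hdvd := orderOf_dvd_of_pow_eq_one (x := g) (n := k * r) (by ext; simpa using hpow)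
    rw [hord, hr] at hdvd
    exact Nat.dvd_of_mul_dvd_mul_right hr0 hdvd
  obtain ⟨l, rfl⟩ := hpk
  refine hne ?_
  rw [← hgk, map_pow, pow_mul, ← MulChar.pow_apply_coe, hχ, MulChar.one_apply_coe, one_pow]

end Finite

end PrimitiveRootSieve

open PrimitiveRootSieve in
/-- The prime `q = 13123111 = 2·3·5·7·11·13·19·23 + 1` lies in `𝒢`: for all non-zero
`a, c` in the field with `13123111` elements there exists a primitive root `g` such that
`a - c·g` is also a primitive root. -/
theorem memG_13123111 :
    Nat.Prime 13123111 ∧ 13123111 = 2 * 3 * 5 * 7 * 11 * 13 * 19 * 23 + 1 ∧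
    memG 13123111 := by
  have hq : Nat.Prime 13123111 := by norm_num
  refine ⟨hq, by norm_num, hq.isPrimePow, fun F _ _ hF a c ha hc ↦ ?_⟩
  have hsqrt : √(13123111 : ℝ) < 3623 := (Real.sqrt_lt' (by norm_num)).mpr (by norm_num)
  obtain ⟨x, hx0, hx1, hx⟩ := exists_isFree (F := F) {2, 3, 5} {7, 11, 13, 19, 23} (by decide)
    (by simp; norm_num) (by rw [hF]; decide) (by rw [hF]; norm_num; linarith) (by norm_num)
    ha (div_ne_zero ha hc)
  have hmem (p : ℕ) (hp : p.Prime) (hdvd : p ∣ Fintype.card F - 1) :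
      p ∈ ({2, 3, 5} ∪ {7, 11, 13, 19, 23} : Finset ℕ) := by
    have hcard : Fintype.card F - 1 = 2 * 3 * 5 * 7 * 11 * 13 * 19 * 23 := by lia
    rw [hcard] at hdvd
    simp only [hp.dvd_mul] at hdvd
    have h (r : ℕ) (hr : r.Prime) : p ∣ r ↔ p = r := Nat.prime_dvd_prime_iff_eq hp hr
    rw [h 2 (by norm_num), h 3 (by norm_num), h 5 (by norm_num), h 7 (by norm_num),
      h 11 (by norm_num), h 13 (by norm_num), h 19 (by norm_num), h 23 (by norm_num)] at hdvd
    simpa only [mem_union, mem_insert, mem_singleton, or_assoc] using hdvd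
  have hx1' : 1 - x ≠ 0 := sub_ne_zero.mpr hx1.symm
  refine ⟨a / c * x, ?_, ?_⟩
  · rw [← hF]
    exact orderOf_eq_of_isFree (mul_ne_zero (div_ne_zero ha hc) hx0) fun p hp hdvd ↦
      (hx p (hmem p hp hdvd)).1
  · rw [← hF, show a - c * (a / c * x) = a * (1 - x) by field_simp]
    exact orderOf_eq_of_isFree (mul_ne_zero ha hx1') fun p hp hdvd ↦ (hx p (hmem p hp hdvd)).2
end
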